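/- (Leakage of noisy 1-out-of-2 OT.) Let 0 ≤ p < 1/2 − 1/(2·√2). Every regular embedding ψ_θ of the primitive P^{OT,p} satisfies Δ(ψ_θ) ≥ (1/2 − p − √(p·(1−p)))² / (32·ln 2). (This is the bound established by the paper's proof of its Theorem on noisy OT.) -/

import Mathlib

open scoped BigOperators
open Matrix

noncomputable section

open scoped Classical in
/-- Base-2 von Neumann entropy of a matrix: minus the sum of `λ·log₂ λ` over the real
eigenvalues (with multiplicity) if the matrix is Hermitian, and `0` otherwise. -/
def vNE {n : Type*} [Fintype n] (ρ : Matrix n n ℂ) : ℝ :=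
  if h : ρ.IsHermitian then -∑ i, h.eigenvalues i * Real.logb 2 (h.eigenvalues i) else 0

/-- Shannon entropy (base 2), with the convention `0·log₂ 0 = 0`. -/
def shannon {α : Type*} [Fintype α] (p : α → ℝ) : ℝ :=
  -∑ a, p a * Real.logb 2 (p a)

/-- Marginal on the first component: `P_X`. -/
def margX {X Y : Type*} [Fintype Y] (P : X × Y → ℝ) (x : X) : ℝ := ∑ y, P (x, y)

/-- Marginal on the second component: `P_Y`. -/
def margY {X Y : Type*} [Fintype X] (P : X × Y → ℝ) (y : Y) : ℝ := ∑ x, P (x, y)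

/-- Mutual information `I(X;Y)` of a joint distribution `P` (base 2). -/
def mutualInfo {X Y : Type*} [Fintype X] [Fintype Y] (P : X × Y → ℝ) : ℝ :=
  ∑ x, ∑ y, P (x, y) * Real.logb 2 (P (x, y) / (margX P x * margY P y))

/-- The regular embedding `ψ_θ(x,y) = e^{iθ(x,y)}·√(P(x,y))`. -/
def regEmb {X Y : Type*} (P θ : X × Y → ℝ) (xy : X × Y) : ℂ :=
  Complex.exp (Complex.I * θ xy) * (Real.sqrt (P xy) : ℂ)

/-- Reduced density matrix `ρ_A(θ)` of the regular embedding `ψ_θ`. -/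
def rhoA {X Y : Type*} [Fintype Y] (P θ : X × Y → ℝ) : Matrix X X ℂ :=
  Matrix.of fun x x' => ∑ y, regEmb P θ (x, y) * star (regEmb P θ (x', y))

/-- Reduced density matrix `ρ_B(θ)` of the regular embedding `ψ_θ`. -/
def rhoB {X Y : Type*} [Fintype X] (P θ : X × Y → ℝ) : Matrix Y Y ℂ :=
  Matrix.of fun y y' => ∑ x, regEmb P θ (x, y) * star (regEmb P θ (x, y'))

/-- Leakage `Δ(ψ_θ) = S(ρ_B(θ)) − I(X;Y)` of a regular embedding. -/
def leakReg {X Y : Type*} [Fintype X] [Fintype Y] (P θ : X × Y → ℝ) : ℝ :=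
  vNE (rhoB P θ) - mutualInfo P

/-- Leakage `Δ_P` of a primitive: the infimum of the leakage over all phase functions. -/
def leakPrim {X Y : Type*} [Fintype X] [Fintype Y] (P : X × Y → ℝ) : ℝ :=
  ⨅ θ : X × Y → ℝ, leakReg P θ

/-- The randomized noisy 1-out-of-2 OT primitive `P^{OT,p}` on `𝒳 = {0,1}×{0,1}` and
`𝒴 = {0,1}×{0,1}`: `P((x₀,x₁),(c,y)) = (1−p)/8` if `y = x_c`, and `p/8` otherwise. -/
def POTnoisy (p : ℝ) : (Bool × Bool) × (Bool × Bool) → ℝ := fun q =>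
  if q.2.2 = (if q.2.1 then q.1.2 else q.1.1) then (1 - p) / 8 else p / 8

open scoped ComplexOrder

/-- Tangent-line bound for `x log x`, with base point `b`. -/
lemma mul_log_le_tangent {x b : ℝ} (hx : 0 ≤ x) (hb : 0 < b) :
    x * Real.log x ≤ x * (x / b - 1 + Real.log b) := by
  rcases hx.eq_or_lt with rfl | hx
  · simp
  · refine mul_le_mul_of_nonneg_left ?_ hx.le
    have h := Real.log_le_sub_one_of_pos (div_pos hx hb)
    rw [Real.log_div hx.ne' hb.ne'] at h
    linarith

/-- The sum of the squared eigenvalues is the sum of the squared moduli of the entries. -/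
lemma sum_sq_eigenvalues {n : Type*} [Fintype n] [DecidableEq n] {A : Matrix n n ℂ}
    (hA : A.IsHermitian) :
    ∑ i, hA.eigenvalues i ^ 2 = ∑ i, ∑ j, ‖A i j‖ ^ 2 := by
  have hentries : (A * A).trace = ∑ i, ∑ j, ((‖A i j‖ ^ 2 : ℝ) : ℂ) := by
    simp only [Matrix.trace, Matrix.diag, Matrix.mul_apply]
    refine Finset.sum_congr rfl fun i _ => Finset.sum_congr rfl fun j _ => ?_
    rw [← hA.apply j i, Complex.star_def, Complex.mul_conj, Complex.normSq_eq_norm_sq]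
  have hspectral : (A * A).trace = ∑ i, ((hA.eigenvalues i ^ 2 : ℝ) : ℂ) := by
    conv_lhs => rw [hA.spectral_theorem]
    rw [← map_mul, Unitary.conjStarAlgAut_apply, Matrix.trace_mul_cycle, Unitary.coe_star_mul_self,
      one_mul, Matrix.diagonal_mul_diagonal, Matrix.trace_diagonal]
    simp [pow_two]
  rw [hspectral] at hentries
  exact_mod_cast hentries

/-- A lower bound on the entropy that is linear in the purity. -/
lemma vNE_ge_of_purity {n : Type*} [Fintype n] {ρ : Matrix n n ℂ} (hρ : ρ.PosSemidef)
    (htr : ρ.trace = 1) {b : ℝ} (hb : 0 < b) :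
    1 - (∑ i, ∑ j, ‖ρ i j‖ ^ 2) / b - Real.log b ≤ vNE ρ * Real.log 2 := by
  classical
  have hsum : ∑ i, hρ.1.eigenvalues i = 1 := by
    have h := hρ.1.trace_eq_sum_eigenvalues
    rw [htr] at h
    simpa using (congrArg Complex.re h).symm
  have hlog : vNE ρ * Real.log 2 =
      -∑ i, hρ.1.eigenvalues i * Real.log (hρ.1.eigenvalues i) := by
    have h2 : Real.log 2 ≠ 0 := (Real.log_pos one_lt_two).ne'
    rw [vNE, dif_pos hρ.1, neg_mul, Finset.sum_mul]
    congr 1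
    refine Finset.sum_congr rfl fun i _ => ?_
    rw [Real.logb, mul_assoc, div_mul_cancel₀ _ h2]
  have hbound : ∑ i, hρ.1.eigenvalues i * Real.log (hρ.1.eigenvalues i) ≤
      (∑ i, hρ.1.eigenvalues i ^ 2) / b + (Real.log b - 1) * ∑ i, hρ.1.eigenvalues i := by
    rw [Finset.sum_div, Finset.mul_sum, ← Finset.sum_add_distrib]
    refine Finset.sum_le_sum fun i _ => ?_
    refine (mul_log_le_tangent (hρ.eigenvalues_nonneg i) hb).trans_eq ?_
    ring
  rw [hsum, sum_sq_eigenvalues] at hbound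
  rw [hlog]
  linarith

lemma rhoB_posSemidef {X Y : Type*} [Fintype X] [Fintype Y] (P θ : X × Y → ℝ) :
    (rhoB P θ).PosSemidef :=
  Matrix.posSemidef_self_mul_conjTranspose (Matrix.of fun (y : Y) (x : X) => regEmb P θ (x, y))

lemma norm_regEmb {X Y : Type*} (P θ : X × Y → ℝ) (xy : X × Y) :
    ‖regEmb P θ xy‖ = √(P xy) := by
  rw [regEmb, norm_mul, mul_comm Complex.I, Complex.norm_exp_ofReal_mul_I, one_mul,
    Complex.norm_real, Real.norm_of_nonneg (Real.sqrt_nonneg _)]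

lemma norm_rhoB_le {X Y : Type*} [Fintype X] (P θ : X × Y → ℝ) (y y' : Y) :
    ‖rhoB P θ y y'‖ ≤ ∑ x, √(P (x, y)) * √(P (x, y')) := by
  refine (norm_sum_le _ _).trans_eq (Finset.sum_congr rfl fun x _ => ?_)
  rw [norm_mul, norm_star, norm_regEmb, norm_regEmb]

lemma trace_rhoB {X Y : Type*} [Fintype X] [Fintype Y] (P θ : X × Y → ℝ) (hP : ∀ q, 0 ≤ P q) :
    (rhoB P θ).trace = ((∑ y, margY P y : ℝ) : ℂ) := by
  simp only [Matrix.trace, Matrix.diag, rhoB, Matrix.of_apply, margY, Complex.ofReal_sum]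
  refine Finset.sum_congr rfl fun y _ => Finset.sum_congr rfl fun x _ => ?_
  rw [Complex.star_def, Complex.mul_conj, Complex.normSq_eq_norm_sq, norm_regEmb,
    Real.sq_sqrt (hP _)]

lemma margX_POTnoisy (p : ℝ) (x : Bool × Bool) : margX (POTnoisy p) x = 1 / 4 := by
  rcases x with ⟨_ | _, _ | _⟩ <;> simp [margX, POTnoisy, Fintype.sum_prod_type] <;> ring

lemma margY_POTnoisy (p : ℝ) (y : Bool × Bool) : margY (POTnoisy p) y = 1 / 4 := by
  rcases y with ⟨_ | _, _ | _⟩ <;> simp [margY, POTnoisy, Fintype.sum_prod_type] <;> ring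

lemma POTnoisy_nonneg {p : ℝ} (hp0 : 0 ≤ p) (hp1 : p ≤ 1) (q) : 0 ≤ POTnoisy p q := by
  unfold POTnoisy
  split_ifs <;> linarith

/-- `I(X;Y) = 1 - h(p)`. -/
lemma mutualInfo_POTnoisy {p : ℝ} (hp0 : 0 ≤ p) (hp1 : p < 1) :
    mutualInfo (POTnoisy p) * Real.log 2 =
      Real.log 2 + (1 - p) * Real.log (1 - p) + p * Real.log p := by
  have h2 : Real.log 2 ≠ 0 := (Real.log_pos one_lt_two).ne'
  have hlog {t : ℝ} (ht : 0 ≤ t) : t * Real.logb 2 (t / 8 / (1 / 4 * (1 / 4))) * Real.log 2 =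
      t * (Real.log 2 + Real.log t) := by
    rcases ht.eq_or_lt with rfl | ht
    · simp
    · rw [mul_assoc, Real.logb, div_mul_cancel₀ _ h2, ← Real.log_mul two_ne_zero ht.ne']
      congr 2
      ring
  have hsum : mutualInfo (POTnoisy p) =
      (1 - p) * Real.logb 2 ((1 - p) / 8 / (1 / 4 * (1 / 4))) +
        p * Real.logb 2 (p / 8 / (1 / 4 * (1 / 4))) := by
    simp only [mutualInfo, margX_POTnoisy, margY_POTnoisy, Fintype.sum_prod_type,
      Fintype.sum_bool, POTnoisy]
    simp only [if_true, Bool.false_eq_true, if_false, reduceCtorEq]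
    ring
  rw [hsum, add_mul, hlog hp0, hlog (sub_nonneg.2 hp1.le)]
  ring

/-- Upper bound on the purity of `ρ_B`, uniform in the phases. -/
lemma purity_rhoB_POTnoisy_le {p : ℝ} (hp0 : 0 ≤ p) (hp1 : p ≤ 1)
    (θ : (Bool × Bool) × (Bool × Bool) → ℝ) :
    ∑ i, ∑ j, ‖rhoB (POTnoisy p) θ i j‖ ^ 2 ≤
      3 / 8 + √(p * (1 - p)) / 2 + 3 / 2 * (p * (1 - p)) := by
  have ha : √((1 - p) / 8) ^ 2 = (1 - p) / 8 := Real.sq_sqrt (by linarith)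
  have hb : √(p / 8) ^ 2 = p / 8 := Real.sq_sqrt (by linarith)
  have hab : √((1 - p) / 8) * √(p / 8) = √(p * (1 - p)) / 8 := by
    rw [← Real.sqrt_mul (by linarith), show (1 - p) / 8 * (p / 8) = p * (1 - p) / 8 ^ 2 by ring,
      Real.sqrt_div' _ (by positivity), Real.sqrt_sq (by norm_num)]
  have hs : √(p * (1 - p)) ^ 2 = p * (1 - p) :=
    Real.sq_sqrt (mul_nonneg hp0 (sub_nonneg.2 hp1))
  calc ∑ i, ∑ j, ‖rhoB (POTnoisy p) θ i j‖ ^ 2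
      ≤ ∑ i, ∑ j, (∑ x, √(POTnoisy p (x, i)) * √(POTnoisy p (x, j))) ^ 2 := by
        gcongr with i _ j _
        exact norm_rhoB_le _ _ _ _
    _ = 4 * (2 * √((1 - p) / 8) ^ 2 + 2 * √(p / 8) ^ 2) ^ 2 +
        4 * (4 * (√((1 - p) / 8) * √(p / 8))) ^ 2 +
        8 * (√((1 - p) / 8) ^ 2 + √(p / 8) ^ 2 + 2 * (√((1 - p) / 8) * √(p / 8))) ^ 2 := by
        simp only [Fintype.sum_prod_type, Fintype.sum_bool, POTnoisy]
        simp only [if_true, Bool.false_eq_true, if_false, reduceCtorEq]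
        ring
    _ = 3 / 8 + √(p * (1 - p)) / 2 + 3 / 2 * (p * (1 - p)) := by
        rw [ha, hb, hab]
        linear_combination (3 / 2) * hs

/-- The numerical inequality left after bounding all logarithms by tangents. -/
lemma tangent_bounds_numeric {p s : ℝ} (hp0 : 0 ≤ p) (hp1 : p < 0.147) (hs0 : 0 ≤ s)
    (hs : s ^ 2 = p * (1 - p)) :
    (1 / 2 - p - s) ^ 2 / 32 + 0.4055 + (3 / 8 + s / 2 + 3 / 2 * (p * (1 - p))) / (3 / 4) - 1 ≤
      (1 - p) * (p + p ^ 2 / 2) + p * (3.079 - 8 * p) := by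
  have hd : (1 / 2 - p - s) ^ 2 ≤ (1 / 2 - p) ^ 2 := by
    have : s ≤ 1 - 2 * p := by nlinarith
    nlinarith
  rcases le_total p 0.05 with h | h
  · have : s ≤ (p * (1 - p) / 0.15 + 0.15) / 2 := by norm_num; nlinarith [sq_nonneg (s - 0.15)]
    nlinarith [mul_nonneg hp0 (sub_nonneg.2 h), mul_nonneg hp0 (mul_nonneg hp0 (sub_nonneg.2 h))]
  · have : s ≤ (p * (1 - p) / 0.35 + 0.35) / 2 := by norm_num; nlinarith [sq_nonneg (s - 0.35)]
    nlinarith [mul_nonneg (sub_nonneg.2 h) (sub_nonneg.2 hp1.le),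
      mul_nonneg hp0 (mul_nonneg (sub_nonneg.2 h) (sub_nonneg.2 hp1.le))]

/-- Second-order bound for `log (1 - p)`. -/
lemma log_one_sub_le {p : ℝ} (hp0 : 0 ≤ p) (hp1 : p < 1) :
    Real.log (1 - p) ≤ -(p + p ^ 2 / 2) := by
  have h := sum_le_hasSum (Finset.range 2) (fun n _ => by positivity)
    (Real.hasSum_pow_div_log_of_abs_lt_one (by rwa [abs_of_nonneg hp0] : |p| < 1))
  norm_num [Finset.sum_range_succ] at h
  linarith

/-- **Leakage of noisy 1-out-of-2 OT.** For `0 ≤ p < 1/2 − 1/(2√2)`, every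
regular embedding `ψ_θ` of `P^{OT,p}` satisfies
`Δ(ψ_θ) ≥ (1/2 − p − √(p(1−p)))² / (32·ln 2)`. -/
theorem leakage_POTnoisy (p : ℝ) (hp0 : 0 ≤ p)
    (hp1 : p < 1 / 2 - 1 / (2 * Real.sqrt 2))
    (θ : (Bool × Bool) × (Bool × Bool) → ℝ) :
    (1 / 2 - p - Real.sqrt (p * (1 - p))) ^ 2 / (32 * Real.log 2) ≤
      leakReg (POTnoisy p) θ := by
  have h2 : 0 < Real.log 2 := Real.log_pos one_lt_two
  have hp : p < 0.147 := by
    have hsqrt : √2 < 1.415 := (Real.sqrt_lt' (by norm_num)).2 (by norm_num)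
    have : 1 / (2 * 1.415) < 1 / (2 * √2) :=
      one_div_lt_one_div_of_lt (by positivity) (by linarith)
    norm_num at this ⊢
    norm_num at hp1
    linarith
  have hpq : 0 ≤ p * (1 - p) := mul_nonneg hp0 (by linarith)
  have htrace : (rhoB (POTnoisy p) θ).trace = 1 := by
    rw [trace_rhoB _ _ (POTnoisy_nonneg hp0 (by linarith))]
    simp [margY_POTnoisy]
  have hS := vNE_ge_of_purity (rhoB_posSemidef _ θ) htrace (b := 3 / 4) (by norm_num)
  have hQ := div_le_div_of_nonneg_right (purity_rhoB_POTnoisy_le hp0 (by linarith) θ)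
    (c := 3 / 4) (by norm_num)
  have hI := mutualInfo_POTnoisy hp0 (by linarith)
  have hnum := tangent_bounds_numeric hp0 hp (Real.sqrt_nonneg _) (Real.sq_sqrt hpq)
  have hlogp := mul_log_le_tangent hp0 (b := 1 / 8) (by norm_num)
  have hlogq := mul_le_mul_of_nonneg_left (log_one_sub_le hp0 (by linarith))
    (show 0 ≤ 1 - p by linarith)
  have hlog8 : Real.log (1 / 8) = -(3 * Real.log 2) := by
    rw [one_div, Real.log_inv, show (8 : ℝ) = 2 ^ 3 by norm_num, Real.log_pow]
    norm_num
  have hlog34 : Real.log (3 / 4) = Real.log 3 - 2 * Real.log 2 := by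
    rw [Real.log_div (by norm_num) (by norm_num), show (4 : ℝ) = 2 ^ 2 by norm_num, Real.log_pow]
    norm_num
  rw [hlog8] at hlogp
  rw [hlog34] at hS
  have hplog : p * 0.693 ≤ p * Real.log 2 :=
    mul_le_mul_of_nonneg_left (by linarith [Real.log_two_gt_d9]) hp0
  rw [← div_div, div_le_iff₀ h2, leakReg, sub_mul, hI]
  linarith [Real.log_two_gt_d9, Real.log_three_lt_d9]
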